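/- Under the stated hypotheses on G, if n ≥ 10 then the eigenvector x satisfies x_k + x_0 > x_1 + x_{n−1}. -/

import Mathlib

open Matrix

/-- The signless Laplacian `Q(G) = D(G) + A(G)` of a finite simple graph `G`. -/
noncomputable def signlessLaplacian {V : Type*} [Fintype V] (G : SimpleGraph V) :
    Matrix V V ℝ :=
  letI := Classical.decEq V
  letI : DecidableRel G.Adj := Classical.decRel _
  Matrix.diagonal (fun v => (G.degree v : ℝ)) + G.adjMatrix ℝ

/-- The `Q`-index of `G`: the largest eigenvalue of the signless Laplacian `Q(G)`. -/
noncomputable def qIndex {V : Type*} [Fintype V] (G : SimpleGraph V) : ℝ :=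
  letI := Classical.decEq V
  sSup (spectrum ℝ (signlessLaplacian G))

/-!
Group the eigenvalue equations `q * x v = ∑ u ~ v, (x v + x u)` symmetrically. Write `y`, `z` for
the entries at the hub and at the vertex of degree two, `s` for the sum over the two neighbors of
the latter, and `t` for the sum over the outer vertices next to those. Then `s = (q - 2) * z`, and
eliminating `t` between the equations at the two neighbors and at the hub, whose degree is `d`,
gives `(q - 4) * s ≤ 2 * z + (q - d + 2) * y`, that is,
`((q - d) * (d - 5) + (d - 2) * (d - 6)) * z ≤ (q - d + 2) * (y - (q - 3) * z)`.
Since `q > d ≥ 6`, this forces `y > (q - 3) * z = s - z`.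
-/

section SignlessLaplacian

variable {V : Type*} [Fintype V] {G : SimpleGraph V} {x : V → ℝ} {v : V}

theorem signlessLaplacian_mulVec_apply [DecidableRel G.Adj] (x : V → ℝ) (v : V) :
    (signlessLaplacian G *ᵥ x) v = ∑ u ∈ G.neighborFinset v, (x v + x u) := by
  classical
  simp only [signlessLaplacian, add_mulVec, Pi.add_apply, mulVec_diagonal,
    SimpleGraph.adjMatrix_mulVec_apply, Finset.sum_add_distrib, Finset.sum_const,
    SimpleGraph.card_neighborFinset_eq_degree, nsmul_eq_mul]
  congr!

theorem sum_add_eq_mul_of_signlessLaplacian_mulVec_eq_smul {q : ℝ}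
    (heig : signlessLaplacian G *ᵥ x = q • x) {S : Finset V} (hS : G.neighborSet v = S) :
    ∑ u ∈ S, (x v + x u) = q * x v := by
  classical
  have hN : G.neighborFinset v = S := by
    rw [← Finset.coe_inj, SimpleGraph.coe_neighborFinset, hS]
  rw [← hN, ← signlessLaplacian_mulVec_apply, heig, Pi.smul_apply, smul_eq_mul]

theorem degree_mul_add_sum_le_signlessLaplacian_mulVec [DecidableRel G.Adj] (hx : 0 ≤ x)
    {S : Finset V} (hS : S ⊆ G.neighborFinset v) :
    G.degree v * x v + ∑ u ∈ S, x u ≤ (signlessLaplacian G *ᵥ x) v := by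
  rw [signlessLaplacian_mulVec_apply, Finset.sum_add_distrib, Finset.sum_const,
    SimpleGraph.card_neighborFinset_eq_degree, nsmul_eq_mul]
  gcongr
  exact fun _ _ _ => hx _

theorem degree_lt_of_signlessLaplacian_mulVec_eq_smul [DecidableRel G.Adj] {q : ℝ}
    (hx : ∀ u, 0 < x u) (heig : signlessLaplacian G *ᵥ x = q • x) {w : V} (hvw : G.Adj v w) :
    (G.degree v : ℝ) < q := by
  have hle := degree_mul_add_sum_le_signlessLaplacian_mulVec (fun u => (hx u).le)
    (Finset.singleton_subset_iff.2 ((G.mem_neighborFinset v w).2 hvw))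
  rw [heig, Finset.sum_singleton, Pi.smul_apply, smul_eq_mul] at hle
  exact lt_of_mul_lt_mul_right (by linarith [hx w]) (hx v).le

end SignlessLaplacian

theorem degree_eq_card_sub_two_of_neighborSet_eq {V : Type*} [Fintype V] {G : SimpleGraph V}
    {v w : V} [Fintype (G.neighborSet v)] (hwv : w ≠ v)
    (hv : G.neighborSet v = {u | u ≠ w ∧ u ≠ v}) : G.degree v = Fintype.card V - 2 := by
  have hcompl : G.neighborSet v = {w, v}ᶜ := by
    rw [hv]
    ext u
    simp
  rw [← SimpleGraph.card_neighborSet_eq_degree, ← Nat.card_eq_fintype_card, hcompl,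
    Nat.card_coe_set_eq, Set.ncard_compl, Set.ncard_pair hwv, Nat.card_eq_fintype_card]

theorem sum_insert_insert_pair_of_nodup {ι M : Type*} [DecidableEq ι] [AddCommMonoid M]
    {a b c d : ι} (h : [a, b, c, d].Nodup) (f : ι → M) :
    ∑ i ∈ {a, b, c, d}, f i = f a + (f b + (f c + f d)) := by
  simpa using List.sum_toFinset f h

theorem lt_add_of_grouped_eigenvalue_equations {q d y z s t : ℝ} (hd : 6 ≤ d) (hdq : d < q)
    (hz : 0 < z) (hapex : 2 * z + s = q * z) (hrim : 5 * s + 2 * z + 2 * y + t = q * s)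
    (hhub : d * y + (s + t) ≤ q * y) : s < y + z := by
  have hs : s = (q - 2) * z := by linarith
  have helim : (q - 4) * s ≤ 2 * z + (q - d + 2) * y := by linarith
  have hgap : 0 < (q - d) * (d - 5) + (d - 2) * (d - 6) :=
    add_pos_of_pos_of_nonneg (mul_pos (by linarith) (by linarith))
      (mul_nonneg (by linarith) (by linarith))
  have hprod : 0 < (q - d + 2) * (y - (q - 3) * z) :=
    calc
      0 < ((q - d) * (d - 5) + (d - 2) * (d - 6)) * z := mul_pos hgap hz
      _ = (q - 4) * ((q - 2) * z) - 2 * z - (q - d + 2) * ((q - 3) * z) := by ring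
      _ ≤ (q - d + 2) * (y - (q - 3) * z) := by rw [← hs]; linarith [helim]
  have hy : 0 < y - (q - 3) * z := pos_of_mul_pos_right hprod (by linarith)
  linarith

theorem stmt_3_general {V : Type*} [Fintype V] {G : SimpleGraph V} [DecidableRel G.Adj]
    {apex hub u w u' w' : V} (hdistinct : [apex, hub, u, w, u', w'].Nodup)
    (hapex : G.neighborSet apex = {u, w})
    (hu : G.neighborSet u = {apex, u', hub, w}) (hw : G.neighborSet w = {apex, u, hub, w'})
    (hu' : G.Adj hub u') (hw' : G.Adj hub w') (hdeg : 6 ≤ G.degree hub)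
    {x : V → ℝ} (hpos : ∀ v, 0 < x v) {q : ℝ} (heig : signlessLaplacian G *ᵥ x = q • x) :
    x u + x w < x hub + x apex := by
  classical
  simp only [List.nodup_cons, List.mem_cons, List.not_mem_nil, or_false, not_or] at hdistinct
  have eigen_apex : 2 * x apex + (x u + x w) = q * x apex := by
    have hsum := sum_add_eq_mul_of_signlessLaplacian_mulVec_eq_smul heig
      (S := {u, w}) (by simpa using hapex)
    rw [Finset.sum_pair (by grind)] at hsum
    linarith
  have eigen_u : 4 * x u + (x apex + x u' + x hub + x w) = q * x u := by
    have hsum := sum_add_eq_mul_of_signlessLaplacian_mulVec_eq_smul heig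
      (S := {apex, u', hub, w}) (by simpa using hu)
    rw [sum_insert_insert_pair_of_nodup (by grind)] at hsum
    linarith
  have eigen_w : 4 * x w + (x apex + x u + x hub + x w') = q * x w := by
    have hsum := sum_add_eq_mul_of_signlessLaplacian_mulVec_eq_smul heig
      (S := {apex, u, hub, w'}) (by simpa using hw)
    rw [sum_insert_insert_pair_of_nodup (by grind)] at hsum
    linarith
  have hub_u : G.Adj hub u := G.adj_symm (by simp [← G.mem_neighborSet, hu])
  have hub_w : G.Adj hub w := G.adj_symm (by simp [← G.mem_neighborSet, hw])
  have hub_nbrs : {u, w, u', w'} ⊆ G.neighborFinset hub := by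
    simp [Finset.insert_subset_iff, hub_u, hub_w, hu', hw']
  have hub_le : G.degree hub * x hub + (x u + x w + (x u' + x w')) ≤ q * x hub := by
    have hle := degree_mul_add_sum_le_signlessLaplacian_mulVec (fun v => (hpos v).le) hub_nbrs
    rw [heig, Pi.smul_apply, smul_eq_mul, sum_insert_insert_pair_of_nodup (by grind)] at hle
    linarith
  exact lt_add_of_grouped_eigenvalue_equations (by exact_mod_cast hdeg)
    (degree_lt_of_signlessLaplacian_mulVec_eq_smul hpos heig hub_u) (hpos apex)
    eigen_apex (by linarith [eigen_u, eigen_w]) hub_le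

/-- for the maximal outer-planar graph with `Δ = n - 2`, if `n ≥ 10` then
the Perron eigenvector satisfies `x_k + x_0 > x_1 + x_{n-1}`. -/
theorem stmt_3 (n k : ℕ) (hn : 6 ≤ n) (hk1 : 3 ≤ k) (hk2 : k ≤ n - 3)
    (G : SimpleGraph (Fin n))
    (h0 : G.neighborSet ⟨0, by omega⟩ = {⟨1, by omega⟩, ⟨n - 1, by omega⟩})
    (hk' : G.neighborSet ⟨k, by omega⟩ =
      {u : Fin n | u ≠ ⟨0, by omega⟩ ∧ u ≠ ⟨k, by omega⟩})
    (h1 : G.neighborSet ⟨1, by omega⟩ =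
      {⟨0, by omega⟩, ⟨2, by omega⟩, ⟨k, by omega⟩, ⟨n - 1, by omega⟩})
    (hlast : G.neighborSet ⟨n - 1, by omega⟩ =
      {⟨0, by omega⟩, ⟨1, by omega⟩, ⟨k, by omega⟩, ⟨n - 2, by omega⟩})
    (x : Fin n → ℝ) (hpos : ∀ i, 0 < x i)
    (heig : (signlessLaplacian G).mulVec x = qIndex G • x)
    (hn10 : 10 ≤ n) :
    x ⟨1, by omega⟩ + x ⟨n - 1, by omega⟩ < x ⟨k, by omega⟩ + x ⟨0, by omega⟩ := by
  classical
  have hdeg := degree_eq_card_sub_two_of_neighborSet_eq (by grind) hk'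
  rw [Fintype.card_fin] at hdeg
  refine stmt_3_general ?_ h0 h1 hlast ?_ ?_ (by omega) hpos heig
  · simp only [List.nodup_cons, List.mem_cons, List.not_mem_nil, List.nodup_nil, Fin.mk.injEq,
      or_false, not_false_eq_true, and_true]
    omega
  all_goals
    rw [← G.mem_neighborSet, hk']
    grind
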